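/- arXiv:0902.0518 — 5 statements merged into one kernel-verified Lean document; each statement's English description precedes it below -/
import Mathlib

section
/- Let T be a pretriangulated category, let f: N → M be an irreducible morphism with N and M indecomposable, and let L → B --h--> M → L[1] be an Auslander-Reiten triangle ending in M. Then there exists a section r: N → B such that f = h ∘ r. -/
open CategoryTheory Limits Pretriangulated

variable {C : Type*} [Category C] [Preadditive C] [HasZeroObject C] [HasShift C ℤ]
  [∀ n : ℤ, (CategoryTheory.shiftFunctor C n).Additive] [Pretriangulated C]
  [HasBinaryBiproducts C]

/-- An object is indecomposable if it is nonzero and not isomorphic to a direct sum of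
two nonzero objects. -/
def Indec (X : C) : Prop :=
  ¬ IsZero X ∧ ∀ Y Z : C, ¬ IsZero Y → ¬ IsZero Z → IsEmpty (X ≅ Y ⊞ Z)

/-- An Auslander-Reiten triangle: a distinguished triangle with indecomposable end terms,
nonzero connecting morphism, such that every non-retraction into the third object factors
through the second morphism. -/
def IsARTriangle (T : Triangle C) : Prop :=
  (T ∈ (distTriang C)) ∧ Indec T.obj₁ ∧ Indec T.obj₃ ∧ T.mor₃ ≠ 0 ∧
  ∀ (W : C) (f : W ⟶ T.obj₃), ¬ IsSplitEpi f → ∃ f' : W ⟶ T.obj₂, f' ≫ T.mor₂ = f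

/-- A morphism is irreducible if it is neither a section nor a retraction, and in any
factorization one of the two factors is a section or a retraction respectively. -/
def IrreducibleMor {X Y : C} (f : X ⟶ Y) : Prop :=
  ¬ IsSplitMono f ∧ ¬ IsSplitEpi f ∧
  ∀ (Z : C) (h : X ⟶ Z) (g : Z ⟶ Y), h ≫ g = f → IsSplitMono h ∨ IsSplitEpi g


/-- If `f : N ⟶ M` is irreducible with `N`, `M` indecomposable and
`L ⟶ B --h--> M ⟶ L[1]` is an Auslander-Reiten triangle ending in `M`, then there is a
section `r : N ⟶ B` with `f = h ∘ r`. -/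
theorem irreducible_factors_through_AR_end
    {N M : C} (f : N ⟶ M) (hf : IrreducibleMor f) (hN : Indec N) (hM : Indec M)
    {L B : C} (u : L ⟶ B) (h : B ⟶ M) (w : M ⟶ L⟦(1 : ℤ)⟧)
    (hAR : IsARTriangle (Triangle.mk u h w)) :
    ∃ r : N ⟶ B, IsSplitMono r ∧ r ≫ h = f := by
  -- `f` is not a retraction, so the AR property lifts it through `h`.
  obtain ⟨hT, -, -, hw, hlift⟩ := hAR
  obtain ⟨r, hr⟩ := hlift N f hf.2.1
  refine ⟨r, (hf.2.2 B r h hr).resolve_right fun hh => hw ?_, hr⟩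
  -- If `h` were a retraction, then `h ≫ w = 0` would force `w = 0`.
  have hz : h ≫ w = 0 := comp_distTriang_mor_zero₂₃ _ hT
  exact (cancel_epi h).1 (hz.trans comp_zero.symm)
end

section
/- If 0 → E → C → P → 0 is an Auslander-Reiten sequence in Comp^{-,b}(P), then P is a bounded complex, i.e. P^i = 0 for all but finitely many i ∈ ℤ. -/
/-!
Let `n` be a degree such that `E` is exact in all degrees `≤ n`, and let `P^{≥n}` be the brutal
truncation of `P`, a bounded subcomplex of `P`. If the inclusion `P^{≥n} ⟶ P` is a retraction, then
`P` vanishes below `n`, hence is bounded. Otherwise the Auslander-Reiten property lifts the inclusion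
to a map `P^{≥n} ⟶ C`. This partial section of `g` extends one degree at a time to the whole of
`P` (`extend_step`): given a section compatible with the differentials in degrees `> i`, any
degreewise splitting in degree `i` fails to commute with the differential by a map from the
projective module `P^i` to the cycles of `E^{i+1}`; by exactness of `E` this map is a boundary,
and subtracting a preimage corrects the splitting. The resulting section of `g` contradicts
non-splitness.
-/

open CategoryTheory Limits

variable {k : Type} [Field k] {A : Type} [Ring A] [Algebra k A] [FiniteDimensional k A]

/-- Objects of `Comp^{-,b}(P)`: cochain complexes of finitely generated projective
`A`-modules, bounded above, with bounded homology. -/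
def IsCompMinusB (X : CochainComplex (ModuleCat A) ℤ) : Prop :=
  (∀ i, Module.Finite A (X.X i)) ∧ (∀ i, Module.Projective A (X.X i)) ∧
  (∃ N : ℤ, ∀ i, N ≤ i → IsZero (X.X i)) ∧
  {i : ℤ | ¬ IsZero (X.homology i)}.Finite

/-- A complex is contractible if its identity map is chain homotopic to zero. -/
def IsContractible (Z : CochainComplex (ModuleCat A) ℤ) : Prop :=
  Nonempty (Homotopy (𝟙 Z) (0 : Z ⟶ Z))

/-- A complex is indecomposable if it is nonzero and not isomorphic to a direct sum of
two nonzero complexes. -/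
def IndecCx (X : CochainComplex (ModuleCat A) ℤ) : Prop :=
  ¬ IsZero X ∧ ∀ (Y Z : CochainComplex (ModuleCat A) ℤ),
    ¬ IsZero Y → ¬ IsZero Z → IsEmpty (X ≅ Y ⊞ Z)

/-- `f` is a section (has a left inverse) in `Comp^{-,b}(P)`. -/
def SectionComp {B C : CochainComplex (ModuleCat A) ℤ} (f : B ⟶ C) : Prop :=
  ∃ g : C ⟶ B, f ≫ g = 𝟙 B

/-- `f` is a retraction (has a right inverse) in `Comp^{-,b}(P)`. -/
def RetractionComp {B C : CochainComplex (ModuleCat A) ℤ} (f : B ⟶ C) : Prop :=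
  ∃ g : C ⟶ B, g ≫ f = 𝟙 C

/-- The homotopy class of `f` is a section (has a left inverse) in `K^{-,b}(P)`. -/
def SectionK {B C : CochainComplex (ModuleCat A) ℤ} (f : B ⟶ C) : Prop :=
  ∃ g : C ⟶ B, Nonempty (Homotopy (f ≫ g) (𝟙 B))

/-- The homotopy class of `f` is a retraction (has a right inverse) in `K^{-,b}(P)`. -/
def RetractionK {B C : CochainComplex (ModuleCat A) ℤ} (f : B ⟶ C) : Prop :=
  ∃ g : C ⟶ B, Nonempty (Homotopy (g ≫ f) (𝟙 C))

/-- `f` is irreducible in `Comp^{-,b}(P)`. -/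
def IrreducibleComp {B C : CochainComplex (ModuleCat A) ℤ} (f : B ⟶ C) : Prop :=
  ¬ SectionComp f ∧ ¬ RetractionComp f ∧
  ∀ D : CochainComplex (ModuleCat A) ℤ, IsCompMinusB D →
    ∀ (h : B ⟶ D) (g : D ⟶ C), h ≫ g = f → SectionComp h ∨ RetractionComp g

/-- The homotopy class of `f` is irreducible in `K^{-,b}(P)`. -/
def IrreducibleK {B C : CochainComplex (ModuleCat A) ℤ} (f : B ⟶ C) : Prop :=
  ¬ SectionK f ∧ ¬ RetractionK f ∧
  ∀ D : CochainComplex (ModuleCat A) ℤ, IsCompMinusB D →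
    ∀ (h : B ⟶ D) (g : D ⟶ C), Nonempty (Homotopy (h ≫ g) f) →
      SectionK h ∨ RetractionK g

/-- `0 → E --u--> C --g--> P → 0` is an Auslander-Reiten sequence in `Comp^{-,b}(P)`:
it is a degreewise short exact sequence which does not split, `E` and `P` are
indecomposable, and every chain map `M ⟶ P` from an object of `Comp^{-,b}(P)` which is
not a retraction factors through `g`. -/
def IsARSeq {E C P : CochainComplex (ModuleCat A) ℤ} (u : E ⟶ C) (g : C ⟶ P) : Prop :=
  (∀ i : ℤ, Function.Injective (u.f i)) ∧
  (∀ i : ℤ, Function.Surjective (g.f i)) ∧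
  (∀ i : ℤ, Function.Exact (u.f i) (g.f i)) ∧
  ¬ RetractionComp g ∧ IndecCx E ∧ IndecCx P ∧
  ∀ M : CochainComplex (ModuleCat A) ℤ, IsCompMinusB M →
    ∀ f : M ⟶ P, ¬ RetractionComp f → ∃ f' : M ⟶ C, f' ≫ g = f

/-! ### Brutal truncations -/

/-- The submodule of `P^i` underlying the brutal truncation `P^{≥n}`: everything if `n ≤ i`,
and zero otherwise. -/
def truncSub (P : CochainComplex (ModuleCat A) ℤ) (n i : ℤ) : Submodule A (P.X i) :=
  if n ≤ i then ⊤ else ⊥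

theorem truncSub_of_le (P : CochainComplex (ModuleCat A) ℤ) {n i : ℤ} (h : n ≤ i) :
    truncSub P n i = ⊤ := if_pos h

theorem truncSub_of_lt (P : CochainComplex (ModuleCat A) ℤ) {n i : ℤ} (h : i < n) :
    truncSub P n i = ⊥ := if_neg (not_le.mpr h)

theorem d_mem_truncSub (P : CochainComplex (ModuleCat A) ℤ) (n i j : ℤ) :
    ∀ x ∈ truncSub P n i, (P.d i j).hom x ∈ truncSub P n j := by
  intro x hx
  by_cases hj : n ≤ j
  · rw [truncSub_of_le P hj]; trivial
  · rcases lt_or_ge i n with hi | hi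
    · rw [truncSub_of_lt P hi, Submodule.mem_bot] at hx
      subst hx
      simp
    · rw [P.shape i j (by simp only [ComplexShape.up_Rel]; omega)]
      simp

/-- The brutal truncation `P^{≥n}`, as a subcomplex of `P`. -/
def trunc (P : CochainComplex (ModuleCat A) ℤ) (n : ℤ) : CochainComplex (ModuleCat A) ℤ where
  X i := ModuleCat.of A (truncSub P n i)
  d i j := ModuleCat.ofHom ((P.d i j).hom.restrict (d_mem_truncSub P n i j))
  shape i j h := by
    ext x
    exact ConcreteCategory.congr_hom (P.shape i j h) x.1
  d_comp_d' i j l _ _ := by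
    ext x
    exact ConcreteCategory.congr_hom (P.d_comp_d i j l) x.1

/-- The inclusion `P^{≥n} ⟶ P`. -/
def truncι (P : CochainComplex (ModuleCat A) ℤ) (n : ℤ) : trunc P n ⟶ P where
  f i := ModuleCat.ofHom (truncSub P n i).subtype
  comm' i j _ := by
    ext x
    rfl

theorem trunc_isZero_of_lt (P : CochainComplex (ModuleCat A) ℤ) {n i : ℤ} (h : i < n) :
    IsZero ((trunc P n).X i) := by
  have : Subsingleton (truncSub P n i) := by
    rw [truncSub_of_lt P h]; infer_instance
  exact ModuleCat.isZero_of_subsingleton (ModuleCat.of A (truncSub P n i))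

theorem trunc_isZero_of_isZero (P : CochainComplex (ModuleCat A) ℤ) {n i : ℤ}
    (h : IsZero (P.X i)) : IsZero ((trunc P n).X i) := by
  have := ModuleCat.subsingleton_of_isZero h
  exact ModuleCat.isZero_of_subsingleton (ModuleCat.of A (truncSub P n i))

theorem isIso_truncι_f (P : CochainComplex (ModuleCat A) ℤ) {n i : ℤ} (h : n ≤ i) :
    IsIso ((truncι P n).f i) := by
  rw [ConcreteCategory.isIso_iff_bijective]
  refine ⟨Subtype.val_injective, fun x => ⟨⟨x, ?_⟩, rfl⟩⟩
  rw [truncSub_of_le P h]; trivial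

theorem trunc_isCompMinusB {P : CochainComplex (ModuleCat A) ℤ} (hP : IsCompMinusB P) (n : ℤ) :
    IsCompMinusB (trunc P n) := by
  obtain ⟨hfin, hproj, ⟨N, hN⟩, -⟩ := hP
  refine ⟨fun i => ?_, fun i => ?_, ⟨N, fun i hi => trunc_isZero_of_isZero P (hN i hi)⟩, ?_⟩
  · rcases lt_or_ge i n with hi | hi
    · have := ModuleCat.subsingleton_of_isZero (trunc_isZero_of_lt P hi)
      infer_instance
    · have := isIso_truncι_f P hi
      have := hfin i
      exact Module.Finite.equiv (asIso ((truncι P n).f i)).toLinearEquiv.symm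
  · rcases lt_or_ge i n with hi | hi
    · have := ModuleCat.subsingleton_of_isZero (trunc_isZero_of_lt P hi)
      infer_instance
    · have := isIso_truncι_f P hi
      have := hproj i
      exact Module.Projective.of_equiv (asIso ((truncι P n).f i)).toLinearEquiv.symm
  · refine (Set.finite_Ico n N).subset fun i hi => ?_
    by_contra hcon
    refine hi (ShortComplex.isZero_homology_of_isZero_X₂ _ ?_)
    rcases lt_or_ge i n with h | h
    · exact trunc_isZero_of_lt P h
    · exact trunc_isZero_of_isZero P (hN i (by simpa [h] using hcon))

/-! ### Extending partial sections -/

/-- A family of degreewise sections of `g` which commutes with the differentials out of all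
degrees `≥ m`. -/
def IsPartialSection {C P : CochainComplex (ModuleCat A) ℤ} (g : C ⟶ P) (m : ℤ)
    (F : ∀ i, P.X i ⟶ C.X i) : Prop :=
  (∀ i, F i ≫ g.f i = 𝟙 _) ∧ ∀ i, m ≤ i → F i ≫ C.d i (i + 1) = P.d i (i + 1) ≫ F (i + 1)

/-- If `E` is exact in degree `i + 1`, a partial section in degrees `≥ i + 1` can be corrected in
degree `i` alone so as to become a partial section in degrees `≥ i`. -/
theorem extend_step {E C P : CochainComplex (ModuleCat A) ℤ} {u : E ⟶ C} {g : C ⟶ P}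
    (hu : ∀ i : ℤ, Function.Injective (u.f i))
    (hug : ∀ i : ℤ, Function.Exact (u.f i) (g.f i))
    (hP : ∀ i, Module.Projective A (P.X i)) (i : ℤ) (hE : E.ExactAt (i + 1))
    (F : ∀ i, P.X i ⟶ C.X i) (hF : IsPartialSection g (i + 1) F) :
    ∃ F' : ∀ i, P.X i ⟶ C.X i, IsPartialSection g i F' ∧ ∀ j, i + 1 ≤ j → F' j = F j := by
  obtain ⟨hs, hc⟩ := hF
  have hmono : ∀ j, Mono (u.f j) := fun j => (ModuleCat.mono_iff_injective _).2 (hu j)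
  have hzero : ∀ j, u.f j ≫ g.f j = 0 := fun j => by
    ext x; exact (hug j).apply_apply_eq_zero x
  have hex : (ShortComplex.mk _ _ (hzero (i + 1))).Exact :=
    (ShortComplex.ShortExact.moduleCat_exact_iff_function_exact _).2 (hug (i + 1))
  -- the failure of `F` to commute with the differential in degree `i`, as a map to `C^{i+1}`
  let δ : P.X i ⟶ C.X (i + 1) := F i ≫ C.d i (i + 1) - P.d i (i + 1) ≫ F (i + 1)
  have hδg : δ ≫ g.f (i + 1) = 0 := by
    simp only [δ, Preadditive.sub_comp, Category.assoc, hs, ← g.comm]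
    rw [reassoc_of% (hs i)]
    simp
  have hδd : δ ≫ C.d (i + 1) (i + 1 + 1) = 0 := by
    simp [δ, Preadditive.sub_comp, Category.assoc, hc (i + 1) le_rfl]
  obtain ⟨ε, hε⟩ : ∃ ε : P.X i ⟶ E.X (i + 1), ε ≫ u.f (i + 1) = δ :=
    have := hmono (i + 1)
    ⟨hex.lift δ hδg, hex.lift_f δ hδg⟩
  have hεd : ε ≫ E.d (i + 1) (i + 1 + 1) = 0 := by
    have := hmono (i + 1 + 1)
    rw [← cancel_mono (u.f (i + 1 + 1)), Category.assoc, ← u.comm, reassoc_of% hε, hδd, zero_comp]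
  obtain ⟨e, he⟩ : ∃ e : P.X i ⟶ E.X i, e ≫ E.d i (i + 1) = ε := by
    have hE' := (E.exactAt_iff' i (i + 1) (i + 1 + 1) (by simp) (by simp)).1 hE
    have := (IsProjective.iff_projective (P.X i)).1 (hP i)
    exact ⟨hE'.liftFromProjective ε hεd, hE'.liftFromProjective_comp ε hεd⟩
  refine ⟨Function.update F i (F i - e ≫ u.f i), ⟨fun j => ?_, fun j hj => ?_⟩, fun j hj => ?_⟩
  · by_cases h : j = i
    · subst h
      simp [Preadditive.sub_comp, hs, hzero]
    · simp [Function.update_of_ne h, hs]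
  · rw [Function.update_of_ne (show j + 1 ≠ i by omega)]
    rcases eq_or_lt_of_le hj with rfl | h
    · rw [Function.update_self, Preadditive.sub_comp, Category.assoc, u.comm, reassoc_of% he, hε]
      simp [δ]
    · rw [Function.update_of_ne h.ne', hc j h]
  · exact Function.update_of_ne (by omega) _ _

/-- If `E` is exact in degrees `≤ n`, a partial section in degrees `≥ n` forces `g` to be a
retraction. -/
theorem retraction_of_partialSection {E C P : CochainComplex (ModuleCat A) ℤ} {u : E ⟶ C}
    {g : C ⟶ P} (hu : ∀ i : ℤ, Function.Injective (u.f i))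
    (hug : ∀ i : ℤ, Function.Exact (u.f i) (g.f i))
    (hP : ∀ i, Module.Projective A (P.X i)) (n : ℤ) (hE : ∀ i ≤ n, E.ExactAt i)
    (F : ∀ i, P.X i ⟶ C.X i) (hF : IsPartialSection g n F) : RetractionComp g := by
  have step : ∀ (j : ℕ) (G : {G : ∀ i, P.X i ⟶ C.X i // IsPartialSection g (n - j) G}),
      ∃ G' : {G' : ∀ i, P.X i ⟶ C.X i // IsPartialSection g (n - (j + 1 : ℕ)) G'},
        ∀ i, n - j ≤ i → G'.1 i = G.1 i := by
    intro j G
    have hj : n - (j + 1 : ℕ) + 1 = n - j := by push_cast; ring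
    obtain ⟨G', h1, h2⟩ := extend_step hu hug hP (n - (j + 1 : ℕ)) (hE _ (by omega)) G.1
      (by rw [hj]; exact G.2)
    exact ⟨⟨G', h1⟩, fun i hi => h2 i (by rw [hj]; exact hi)⟩
  choose next hnext using step
  let G : ∀ j : ℕ, {G : ∀ i, P.X i ⟶ C.X i // IsPartialSection g (n - j) G} :=
    fun j => Nat.rec ⟨F, by simpa using hF⟩ next j
  have hG : ∀ (j l : ℕ), j ≤ l → ∀ i, n - j ≤ i → (G l).1 i = (G j).1 i := by
    intro j l hjl
    induction l, hjl using Nat.le_induction with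
    | base => exact fun _ _ => rfl
    | succ l hl ih =>
      intro i hi
      rw [← ih i hi]
      exact hnext l (G l) i (by omega)
  -- in degree `i` the sequence `G j` is constant from `j = n - i` on
  refine ⟨{ f := fun i => (G (n - i).toNat).1 i, comm' := ?_ }, ?_⟩
  · rintro i _ rfl
    rw [(G _).2.2 i (by omega), hG (n - (i + 1)).toNat (n - i).toNat (by omega) (i + 1) (by omega)]
  · ext1 i
    exact (G _).2.1 i

/-- If `E` is exact in degrees `≤ n` and the inclusion `P^{≥n} ⟶ P` lifts along `g`, then `g` is
a retraction. -/
theorem retraction_of_lift {E C P : CochainComplex (ModuleCat A) ℤ} {u : E ⟶ C} {g : C ⟶ P}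
    (hu : ∀ i : ℤ, Function.Injective (u.f i)) (hg : ∀ i : ℤ, Function.Surjective (g.f i))
    (hug : ∀ i : ℤ, Function.Exact (u.f i) (g.f i))
    (hP : ∀ i, Module.Projective A (P.X i)) (n : ℤ) (hE : ∀ i ≤ n, E.ExactAt i)
    (s : trunc P n ⟶ C) (hs : s ≫ g = truncι P n) : RetractionComp g := by
  classical
  have hsplit : ∀ i, ∃ t : P.X i ⟶ C.X i, t ≫ g.f i = 𝟙 _ := fun i => by
    have := (IsProjective.iff_projective (P.X i)).1 (hP i)
    have := (ModuleCat.epi_iff_surjective _).2 (hg i)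
    exact ⟨Projective.factorThru (𝟙 _) (g.f i), Projective.factorThru_comp _ _⟩
  choose t ht using hsplit
  have hiso : ∀ i, n ≤ i → IsIso ((truncι P n).f i) := fun i hi => isIso_truncι_f P hi
  let F : ∀ i, P.X i ⟶ C.X i := fun i =>
    if h : n ≤ i then (have := hiso i h; inv ((truncι P n).f i)) ≫ s.f i else t i
  have hF : ∀ i, n ≤ i → (truncι P n).f i ≫ F i = s.f i := fun i hi => by
    have := hiso i hi
    simp [F, hi]
  refine retraction_of_partialSection hu hug hP n hE F ⟨fun i => ?_, fun i hi => ?_⟩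
  · by_cases h : n ≤ i
    · have := hiso i h
      rw [← cancel_epi ((truncι P n).f i), reassoc_of% (hF i h), ← HomologicalComplex.comp_f, hs,
        Category.comp_id]
    · simp [F, h, ht]
  · have := hiso i hi
    rw [← cancel_epi ((truncι P n).f i), reassoc_of% (hF i hi), s.comm,
      (truncι P n).comm_assoc, hF (i + 1) (by omega)]

/-! ### Boundedness of the end term -/

/-- If `0 → E → C → P → 0` is an Auslander-Reiten sequence in `Comp^{-,b}(P)`, then `P`
is a bounded complex. -/
theorem AR_sequence_end_term_bounded
    (E C P : CochainComplex (ModuleCat A) ℤ)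
    (hE : IsCompMinusB E) (hC : IsCompMinusB C) (hP : IsCompMinusB P)
    (u : E ⟶ C) (g : C ⟶ P) (hAR : IsARSeq u g) :
    {i : ℤ | ¬ IsZero (P.X i)}.Finite := by
  obtain ⟨hu, hg, hug, hsplit, -, -, hlift⟩ := hAR
  obtain ⟨n, hn⟩ : ∃ n : ℤ, ∀ i ≤ n, E.ExactAt i := by
    obtain ⟨b, hb⟩ := hE.2.2.2.bddBelow
    refine ⟨b - 1, fun i hi => ?_⟩
    rw [E.exactAt_iff_isZero_homology]
    by_contra h
    have : b ≤ i := hb h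
    omega
  obtain ⟨N, hN⟩ := hP.2.2.1
  by_cases hr : RetractionComp (truncι P n)
  · obtain ⟨r, hr⟩ := hr
    refine (Set.finite_Ico n N).subset fun i hi => ?_
    by_contra hcon
    rcases lt_or_ge i n with h | h
    · -- the identity of `P^i` factors through `(P^{≥n})^i = 0`
      refine hi ((IsZero.iff_id_eq_zero _).2 ?_)
      rw [← HomologicalComplex.id_f, ← hr, HomologicalComplex.comp_f,
        (trunc_isZero_of_lt P h).eq_of_tgt (r.f i) 0, zero_comp]
    · exact hi (hN i (by simpa [h] using hcon))
  · obtain ⟨s, hs⟩ := hlift _ (trunc_isCompMinusB hP n) _ hr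
    exact (hsplit (retraction_of_lift hu hg hug hP.2.1 n hn s hs)).elim
end

section
/- Let X --f--> B --g--> C --w--> X[1] be an Auslander-Reiten triangle in a pretriangulated category T and let M be an indecomposable object of T. Then: (1) the map Hom(M, X) → Hom(M, B), h ↦ f ∘ h, is injective if and only if M[1] is not isomorphic to C; (2) the map Hom(M, B) → Hom(M, C), h ↦ g ∘ h, is surjective if and only if M is not isomorphic to C. -/
/-!
By exactness of `Hom(M, -)` on the triangle, surjectivity of `Hom(M, B) → Hom(M, Z)` means that
`a ≫ w = 0` for every `a : M ⟶ Z`, and injectivity of `Hom(M, X) → Hom(M, B)` means that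
`a ≫ w = 0` for every `a : M⟦1⟧ ⟶ Z`. Precomposing `w` with an isomorphism gives a nonzero
morphism, so the existence of an isomorphism `a` violates the condition. Conversely, a retraction
from an indecomposable object onto a nonzero object is an isomorphism
(`Indec.isIso_of_isSplitEpi`), because split epimorphisms in a pretriangulated category have a
complementary summand. If there is no isomorphism, no `a` is therefore a retraction, so each `a`
factors through `g` by the Auslander-Reiten property, and `g ≫ w = 0`.
For `M⟦1⟧` the lemma is applied to `a⟦-1⟧`, which has source isomorphic to `M`.
-/

open CategoryTheory Limits Pretriangulated

variable {C : Type*} [Category C] [Preadditive C] [HasZeroObject C] [HasShift C ℤ]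
  [∀ n : ℤ, (CategoryTheory.shiftFunctor C n).Additive] [Pretriangulated C]
  [HasBinaryBiproducts C]

/-- The fibre of a split epimorphism is a complementary direct summand, hence vanishes when the
source is indecomposable and the target is nonzero. -/
lemma Indec.isIso_of_isSplitEpi {M N : C} (hM : Indec M) (hN : ¬ IsZero N) (a : M ⟶ N)
    [IsSplitEpi a] : IsIso a := by
  obtain ⟨K, i, d, hT⟩ := distinguished_cocone_triangle₁ a
  have hd : d = 0 := (Triangle.mk i a d).mor₃_eq_zero_of_epi₂ hT (inferInstanceAs (Epi a))
  obtain ⟨e, -, -⟩ := exists_iso_binaryBiproduct_of_distTriang _ hT hd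
  have hK : IsZero K := by
    by_contra hK
    exact (hM.2 K N hK hN).false e
  exact ((Triangle.mk i a d).isZero₁_iff_isIso₂ hT).1 hK

/-- The analogue of `Indec.isIso_of_isSplitEpi` for morphisms out of `M⟦1⟧`. -/
lemma Indec.isIso_of_isSplitEpi_shift {M N : C} (hM : Indec M) (hN : ¬ IsZero N)
    (a : M⟦(1 : ℤ)⟧ ⟶ N) [IsSplitEpi a] : IsIso a := by
  have hN' : ¬ IsZero (N⟦(-1 : ℤ)⟧) := fun h =>
    hN (((shiftFunctor C (1 : ℤ)).map_isZero h).of_iso (shiftNegShift N (1 : ℤ)).symm)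
  have := hM.isIso_of_isSplitEpi hN' ((shiftShiftNeg M (1 : ℤ)).inv ≫ a⟦(-1 : ℤ)⟧')
  have : IsIso (a⟦(-1 : ℤ)⟧') := IsIso.of_isIso_comp_left (shiftShiftNeg M (1 : ℤ)).inv _
  exact isIso_of_reflects_iso a (shiftFunctor C (-1 : ℤ))

/-- For an Auslander-Reiten triangle `X --f--> B --g--> C --w--> X[1]` and an
indecomposable object `M`: post-composition `Hom(M,X) → Hom(M,B)` with `f` is injective
iff `M[1] ≇ C`, and post-composition `Hom(M,B) → Hom(M,C)` with `g` is surjective iff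
`M ≇ C`. -/
theorem AR_triangle_hom_from_indecomposable
    {X B Z : C} (f : X ⟶ B) (g : B ⟶ Z) (w : Z ⟶ X⟦(1 : ℤ)⟧)
    (hAR : IsARTriangle (Triangle.mk f g w)) (M : C) (hM : Indec M) :
    (Function.Injective (fun h : M ⟶ X => h ≫ f) ↔ ¬ Nonempty (M⟦(1 : ℤ)⟧ ≅ Z)) ∧
    (Function.Surjective (fun h : M ⟶ B => h ≫ g) ↔ ¬ Nonempty (M ≅ Z)) := by
  obtain ⟨hT, -, hZ, hw, hfac⟩ := hAR
  change w ≠ 0 at hw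
  change ∀ (W : C) (a : W ⟶ Z), ¬ IsSplitEpi a → ∃ b : W ⟶ B, b ≫ g = a at hfac
  change Indec Z at hZ
  have hgw : g ≫ w = 0 := comp_distTriang_mor_zero₂₃ _ hT
  have hwf : w ≫ f⟦(1 : ℤ)⟧' = 0 := comp_distTriang_mor_zero₃₁ _ hT
  refine ⟨⟨?_, ?_⟩, ⟨?_, ?_⟩⟩
  · rintro hinj ⟨e⟩
    obtain ⟨k, hk⟩ := (shiftFunctor C (1 : ℤ)).map_surjective (e.hom ≫ w)
    have hkf : k ≫ f = 0 := (shiftFunctor C (1 : ℤ)).map_injective (by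
      rw [Functor.map_comp, hk, Category.assoc, hwf, comp_zero, Functor.map_zero])
    have hk0 : k = 0 := hinj (by simpa using hkf)
    rw [hk0, Functor.map_zero] at hk
    exact hw (by rw [← cancel_epi e.hom, ← hk, comp_zero])
  · intro hne h₁ h₂ h
    rw [← sub_eq_zero]
    have hsub : (h₁ - h₂) ≫ f = 0 := by rw [Preadditive.sub_comp, sub_eq_zero]; exact h
    obtain ⟨a, ha⟩ : ∃ a : M⟦(1 : ℤ)⟧ ⟶ Z, (h₁ - h₂)⟦(1 : ℤ)⟧' = a ≫ w :=
      Triangle.coyoneda_exact₁ _ hT _ (by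
        change (h₁ - h₂)⟦(1 : ℤ)⟧' ≫ f⟦(1 : ℤ)⟧' = 0
        rw [← Functor.map_comp, hsub, Functor.map_zero])
    obtain ⟨b, hb⟩ : ∃ b : M⟦(1 : ℤ)⟧ ⟶ B, b ≫ g = a := hfac _ a fun _ =>
      have : IsIso a := hM.isIso_of_isSplitEpi_shift hZ.1 a
      hne ⟨asIso a⟩
    apply (shiftFunctor C (1 : ℤ)).map_injective
    rw [ha, ← hb, Category.assoc, hgw, comp_zero, Functor.map_zero]
  · rintro hsurj ⟨e⟩
    obtain ⟨b, hb : b ≫ g = e.hom⟩ := hsurj e.hom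
    exact hw (by rw [← cancel_epi e.hom, ← hb, Category.assoc, hgw, comp_zero, comp_zero])
  · intro hne a
    exact hfac _ a fun _ =>
      have : IsIso a := hM.isIso_of_isSplitEpi hZ.1 a
      hne ⟨asIso a⟩
end

section
/- Let k be a field, A a finite-dimensional k-algebra, and n ≥ 1. Let P_0, …, P_{2^n−1} be indecomposable bounded cochain complexes of finite-dimensional A-modules with l_c(P_i) ≤ n for all i. If f_i: P_{i−1} → P_i (for 1 ≤ i ≤ 2^n−1) are chain maps none of which is an isomorphism of complexes, then the composite f_{2^n−1} ∘ ⋯ ∘ f_2 ∘ f_1 is the zero chain map. -/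
/-!
This is the Harada–Sai lemma, for complexes. Let `ℓ` be the length `l_c`, extended to an
`ℕ∞`-valued function on all complexes: it is additive on short exact sequences and vanishes only
on zero objects. Write `r φ = ℓ (im φ)`. The claim is that a composite of `2 ^ m - 1` of the given
maps has `r ≤ n - m`; for `m = n` this gives the theorem.

For the step from `m` to `m + 1`, a composite of `2 ^ (m + 1) - 1` maps has the form `a ≫ h ≫ b`,
where `a` and `b` are composites of `2 ^ m - 1` maps and `h` is one of the given maps. If its `r`
did not drop below `n - m`, then `r a = r b = r (a ≫ h ≫ b) = n - m`, a nonzero number. Whenever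
`r f = r (f ≫ u) = r u` is finite, the induced map `im f ⟶ im u` is an isomorphism, so the middle
object is `im u ⊞ ker u`; if it is indecomposable and `r f ≠ 0`, then `u` is mono and `f` is epi
(`IsLength.mono_and_epi`). Applied to `a, h ≫ b` this shows that `h` is mono, and applied to
`a ≫ h, b` that `h` is epi, so `h` would be an isomorphism (`IsLength.rank_comp_comp_lt`).
-/

open CategoryTheory Limits DirectSum

variable {k : Type} [Field k] {A : Type} [Ring A] [Algebra k A] [FiniteDimensional k A]

/-- `l_c(X) ≤ n`: the module `⊕ᵢ Xⁱ` has a composition series of length at most `n`. -/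
def lcLE (X : CochainComplex (ModuleCat A) ℤ) (n : ℕ) : Prop :=
  ∃ s : CompositionSeries (Submodule A (⨁ i : ℤ, X.X i)),
    s.head = ⊥ ∧ s.last = ⊤ ∧ s.length ≤ n

/-- The composite of the first `m` maps of a sequence of composable morphisms. -/
def compChain (P : ℕ → CochainComplex (ModuleCat A) ℤ)
    (g : ∀ i, P i ⟶ P (i + 1)) : ∀ m : ℕ, (P 0 ⟶ P m)
  | 0 => 𝟙 (P 0)
  | (m + 1) => compChain P g m ≫ g m

section Length

universe v u

variable {C : Type u} [Category.{v} C] [Abelian C]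

/-- An additive length function on an abelian category: additive on short exact sequences, and
zero exactly on the zero objects. The value `⊤` is allowed. -/
structure IsLength (ℓ : C → ℕ∞) : Prop where
  zero_iff : ∀ X, ℓ X = 0 ↔ IsZero X
  add : ∀ S : ShortComplex C, S.ShortExact → ℓ S.X₂ = ℓ S.X₁ + ℓ S.X₃

namespace IsLength

variable {ℓ : C → ℕ∞} (hℓ : IsLength ℓ)

include hℓ

lemma eq_add_cokernel {X Y : C} (i : X ⟶ Y) [Mono i] : ℓ Y = ℓ X + ℓ (cokernel i) :=
  hℓ.add (ShortComplex.mk i (cokernel.π i) (cokernel.condition i))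
    { exact := ShortComplex.exact_cokernel i
      mono_f := inferInstanceAs (Mono i)
      epi_g := inferInstanceAs (Epi (cokernel.π i)) }

lemma eq_kernel_add {X Y : C} (p : X ⟶ Y) [Epi p] : ℓ X = ℓ (kernel p) + ℓ Y :=
  hℓ.add (ShortComplex.mk (kernel.ι p) p (kernel.condition p))
    { exact := ShortComplex.exact_kernel p
      mono_f := inferInstanceAs (Mono (kernel.ι p))
      epi_g := inferInstanceAs (Epi p) }

lemma le_of_mono {X Y : C} (i : X ⟶ Y) [Mono i] : ℓ X ≤ ℓ Y := by
  rw [hℓ.eq_add_cokernel i]; exact le_self_add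

lemma le_of_epi {X Y : C} (p : X ⟶ Y) [Epi p] : ℓ Y ≤ ℓ X := by
  rw [hℓ.eq_kernel_add p]; exact le_add_self

lemma eq_of_iso {X Y : C} (e : X ≅ Y) : ℓ X = ℓ Y :=
  le_antisymm (hℓ.le_of_mono e.hom) (hℓ.le_of_epi e.hom)

lemma isIso_of_mono {X Y : C} (i : X ⟶ Y) [Mono i] (h : ℓ X = ℓ Y) (hX : ℓ X ≠ ⊤) :
    IsIso i := by
  have h0 : ℓ (cokernel i) = 0 := by
    have := hℓ.eq_add_cokernel i
    rw [← h] at this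
    exact ENat.add_right_injective_of_ne_top hX ((this.symm.trans (add_zero _).symm :))
  have : Epi i := Preadditive.epi_of_isZero_cokernel i ((hℓ.zero_iff _).1 h0)
  exact isIso_of_mono_of_epi i

lemma isIso_of_epi {X Y : C} (p : X ⟶ Y) [Epi p] (h : ℓ X = ℓ Y) (hX : ℓ X ≠ ⊤) :
    IsIso p := by
  have h0 : ℓ (kernel p) = 0 := by
    have := hℓ.eq_kernel_add p
    rw [← h] at this
    exact ENat.add_left_injective_of_ne_top hX ((this.symm.trans (zero_add _).symm :))
  have : Mono p := Preadditive.mono_of_isZero_kernel p ((hℓ.zero_iff _).1 h0)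
  exact isIso_of_mono_of_epi p

lemma rank_comp_le_left {X Y Z : C} (f : X ⟶ Y) (u : Y ⟶ Z) :
    ℓ (image (f ≫ u)) ≤ ℓ (image f) := by
  have e : image (image.ι f ≫ u) ≅ image (f ≫ u) :=
    image.isoStrongEpiMono (factorThruImage f ≫ factorThruImage (image.ι f ≫ u))
      (image.ι (image.ι f ≫ u)) (by simp)
  rw [← hℓ.eq_of_iso e]
  exact hℓ.le_of_epi (factorThruImage (image.ι f ≫ u))

lemma rank_comp_le_right {X Y Z : C} (f : X ⟶ Y) (u : Y ⟶ Z) :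
    ℓ (image (f ≫ u)) ≤ ℓ (image u) :=
  hℓ.le_of_mono (image.preComp f u)

/-- If `f`, `u` and `f ≫ u` have the same finite rank, then the induced map `im f ⟶ im u` is an
isomorphism. -/
lemma isIso_image_to_image {X Y Z : C} (f : X ⟶ Y) (u : Y ⟶ Z)
    (hf : ℓ (image f) = ℓ (image (f ≫ u))) (hu : ℓ (image u) = ℓ (image (f ≫ u)))
    (hfin : ℓ (image f) ≠ ⊤) : IsIso (image.ι f ≫ factorThruImage u) := by
  set e := image.ι f ≫ factorThruImage u with he
  have e' : image e ≅ image (f ≫ u) :=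
    image.isoStrongEpiMono (factorThruImage f ≫ factorThruImage e)
      (image.ι e ≫ image.ι u) (by simp [he])
  have he' := hℓ.eq_of_iso e'
  have h1 : IsIso (factorThruImage e) := hℓ.isIso_of_epi _ (by rw [hf, he']) hfin
  have h2 : IsIso (image.ι e) :=
    hℓ.isIso_of_mono _ (by rw [hu, he']) (by rw [he', ← hf]; exact hfin)
  rw [← image.fac e]
  infer_instance

/-- If `f`, `u` and `f ≫ u` have the same finite nonzero rank, and the object in the middle is
indecomposable, then `u` is mono and `f` is epi: the isomorphism `im f ⟶ im u` splits
`Y ⟶ im u`, and so `ker u = 0`. -/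
lemma mono_and_epi {X Y Z : C} (f : X ⟶ Y) (u : Y ⟶ Z)
    (hY : ∀ V W : C, ¬ IsZero V → ¬ IsZero W → IsEmpty (Y ≅ V ⊞ W))
    (hf : ℓ (image f) = ℓ (image (f ≫ u))) (hu : ℓ (image u) = ℓ (image (f ≫ u)))
    (hfin : ℓ (image f) ≠ ⊤) (h0 : ℓ (image f) ≠ 0) : Mono u ∧ Epi f := by
  have he := hℓ.isIso_image_to_image f u hf hu hfin
  set p := factorThruImage u with hp
  let S := ShortComplex.mk (kernel.ι p) p (kernel.condition p)
  let s : image u ⟶ Y := inv (image.ι f ≫ p) ≫ image.ι f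
  have hs : s ≫ p = 𝟙 _ := by simp [s]
  let σ : S.Splitting := ShortComplex.Splitting.ofExactOfSection S
    (ShortComplex.exact_kernel p) s hs (inferInstanceAs (Mono (kernel.ι p)))
  have hk : IsZero (kernel p) := by
    by_contra hk
    refine (hY (kernel p) (image u) hk ?_).false σ.isoBinaryBiproduct
    rw [← hℓ.zero_iff, hu, ← hf]
    exact h0
  have hpm : Mono p := Preadditive.mono_of_isZero_kernel p hk
  have hpi : IsIso p := isIso_of_mono_of_epi p
  have hi : IsIso (image.ι f) := IsIso.of_isIso_comp_right (image.ι f) p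
  constructor
  · rw [← image.fac u]; exact mono_comp _ _
  · rw [← image.fac f]; exact epi_comp _ _

/-- The Harada–Sai step: composing two maps of rank at most `r ≠ 0` with a non-isomorphism between
indecomposable objects in between makes the rank drop below `r`. -/
lemma rank_comp_comp_lt {W X Y Z : C} (a : W ⟶ X) (h : X ⟶ Y) (b : Y ⟶ Z)
    (hX : ∀ V V' : C, ¬ IsZero V → ¬ IsZero V' → IsEmpty (X ≅ V ⊞ V'))
    (hY : ∀ V V' : C, ¬ IsZero V → ¬ IsZero V' → IsEmpty (Y ≅ V ⊞ V'))
    (hh : ¬ IsIso h) {r : ℕ∞} (hr : r ≠ ⊤) (hr0 : r ≠ 0)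
    (ha : ℓ (image a) ≤ r) (hb : ℓ (image b) ≤ r) : ℓ (image (a ≫ h ≫ b)) < r := by
  by_contra! hlt
  have l1 := hℓ.rank_comp_le_left a (h ≫ b)
  have l2 := hℓ.rank_comp_le_right a (h ≫ b)
  have l3 := hℓ.rank_comp_le_right h b
  have l4 := hℓ.rank_comp_le_left (a ≫ h) b
  have l5 := hℓ.rank_comp_le_left a h
  rw [Category.assoc] at l4
  have e : ℓ (image (a ≫ h ≫ b)) = r := le_antisymm (l1.trans ha) hlt
  have ea : ℓ (image a) = r := le_antisymm ha (hlt.trans l1)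
  have eb : ℓ (image b) = r := le_antisymm hb (hlt.trans (l2.trans l3))
  have ehb : ℓ (image (h ≫ b)) = r := le_antisymm (l3.trans hb) (hlt.trans l2)
  have eah : ℓ (image (a ≫ h)) = r := le_antisymm (l5.trans ha) (hlt.trans l4)
  have h1 : Mono (h ≫ b) := (hℓ.mono_and_epi a (h ≫ b) hX (ea.trans e.symm) (ehb.trans e.symm)
    (ea ▸ hr) (ea ▸ hr0)).1
  have h2 : Epi (a ≫ h) := (hℓ.mono_and_epi (a ≫ h) b hY
    (by rw [Category.assoc, eah, e]) (by rw [Category.assoc, eb, e])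
    (eah ▸ hr) (eah ▸ hr0)).2
  have : Mono h := mono_of_mono h b
  have : Epi h := epi_of_epi a h
  exact hh (isIso_of_mono_of_epi h)

end IsLength

end Length

/-- The length `l_c(X)` of the module `⊕ᵢ Xⁱ`, as an element of `ℕ∞`. -/
noncomputable def lc {A : Type} [Ring A] (X : CochainComplex (ModuleCat A) ℤ) : ℕ∞ :=
  Module.length A (⨁ i : ℤ, X.X i)

lemma isLength_lc {A : Type} [Ring A] :
    IsLength (lc : CochainComplex (ModuleCat A) ℤ → ℕ∞) where
  zero_iff X := by
    rw [lc, Module.length_eq_zero_iff]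
    constructor
    · intro h
      rw [IsZero.iff_id_eq_zero]
      ext i x
      have := congrArg (fun y => y i)
        (Subsingleton.elim (DirectSum.lof A ℤ (fun i => X.X i) i x) 0)
      simpa using this
    · intro h
      refine ⟨fun x y => DFinsupp.ext fun i => ?_⟩
      have : Subsingleton (X.X i) := ModuleCat.subsingleton_of_isZero
        ((HomologicalComplex.eval _ _ i).map_isZero h)
      exact Subsingleton.elim _ _
  add S hS := by
    have hS' i := (HomologicalComplex.shortExact_iff_degreewise_shortExact S).1 hS i
    refine Module.length_eq_add_of_exact (R := A)
      (DirectSum.lmap fun i => (S.f.f i).hom) (DirectSum.lmap fun i => (S.g.f i).hom)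
      ((DirectSum.lmap_injective _).2 fun i => (hS' i).moduleCat_injective_f)
      ((DirectSum.lmap_surjective _).2 fun i => (hS' i).moduleCat_surjective_g) ?_
    -- exactness of the direct sum is checked on components
    have key i : LinearMap.range (S.f.f i).hom = LinearMap.ker (S.g.f i).hom :=
      (hS' i).exact.moduleCat_range_eq_ker
    rw [LinearMap.exact_iff, DirectSum.ker_lmap, DirectSum.range_lmap]
    simp only [key]

lemma lc_le_of_lcLE {A : Type} [Ring A] {X : CochainComplex (ModuleCat A) ℤ} {n : ℕ}
    (h : lcLE X n) : lc X ≤ n := by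
  obtain ⟨s, h1, h2, h3⟩ := h
  rw [lc, ← Module.length_compositionSeries s h1 h2]
  exact_mod_cast h3

lemma compChain_add {A : Type} [Ring A] (P : ℕ → CochainComplex (ModuleCat A) ℤ)
    (f : ∀ i, P i ⟶ P (i + 1)) (a b : ℕ) :
    compChain P f (a + b) =
      compChain P f a ≫ compChain (fun i => P (a + i)) (fun i => f (a + i)) b := by
  induction b with
  | zero => exact (Category.comp_id _).symm
  | succ b ih =>
    change compChain P f (a + b) ≫ f (a + b) = _
    rw [ih, Category.assoc]
    rfl

/-- A composite of `L = 2 ^ m - 1` non-isomorphisms has rank at most `n - m`. The induction is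
over all sequences at once, so that it applies to the tail of a sequence. -/
lemma rank_compChain_le {A : Type} [Ring A] (n : ℕ) (m : ℕ) (hm : m ≤ n) :
    ∀ (L : ℕ) (_ : L + 1 = 2 ^ m) (P : ℕ → CochainComplex (ModuleCat A) ℤ)
      (f : ∀ i, P i ⟶ P (i + 1)) (_ : ∀ i ≤ L, IndecCx (P i)) (_ : ∀ i ≤ L, lcLE (P i) n)
      (_ : ∀ i < L, ¬ IsIso (f i)), lc (image (compChain P f L)) ≤ ((n - m : ℕ) : ℕ∞) := by
  induction m with
  | zero =>
    intro L hL P f _ hlc _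
    exact (isLength_lc.le_of_mono (image.ι _)).trans (lc_le_of_lcLE (hlc L le_rfl))
  | succ m ih =>
    intro L' hL' P f hind hlc hf
    obtain ⟨L, hL⟩ : ∃ L, L + 1 = 2 ^ m :=
      ⟨2 ^ m - 1, Nat.sub_add_cancel Nat.one_le_two_pow⟩
    obtain rfl : L' = L + 1 + L := by rw [pow_succ] at hL'; omega
    have ha := ih (by omega) L hL P f (fun i hi => hind i (by omega))
      (fun i hi => hlc i (by omega)) (fun i hi => hf i (by omega))
    have hb := ih (by omega) L hL (fun i => P (L + 1 + i)) (fun i => f (L + 1 + i))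
      (fun i hi => hind _ (by omega)) (fun i hi => hlc _ (by omega))
      (fun i hi => hf _ (by omega))
    have hlt := isLength_lc.rank_comp_comp_lt (compChain P f L) (f L)
      (compChain (fun i => P (L + 1 + i)) (fun i => f (L + 1 + i)) L)
      (hind L (by omega)).2 (hind (L + 1) (by omega)).2 (hf L (by omega))
      (ENat.natCast_ne_top _) (by exact_mod_cast (by omega : n - m ≠ 0)) ha hb
    have hcomp : compChain P f (L + 1 + L) = compChain P f L ≫ f L ≫
        compChain (fun i => P (L + 1 + i)) (fun i => f (L + 1 + i)) L :=
      (compChain_add P f (L + 1) L).trans (Category.assoc _ _ _)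
    rw [hcomp]
    obtain ⟨q, hq⟩ := ENat.ne_top_iff_exists.1 hlt.ne_top
    rw [← hq] at hlt ⊢
    have hlt' : q < n - m := by exact_mod_cast hlt
    exact_mod_cast (by omega : q ≤ n - (m + 1))

/-- If `P_0, …, P_{2^n-1}` are indecomposable bounded complexes of finite-dimensional
`A`-modules with `l_c(P_i) ≤ n`, and `f_i : P_{i-1} ⟶ P_i` are chain maps none of which
is an isomorphism of complexes, then `f_{2^n-1} ∘ ⋯ ∘ f_1 = 0`. -/
theorem comp_of_nonisos_eq_zero
    (n : ℕ) (hn : 1 ≤ n)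
    (P : ℕ → CochainComplex (ModuleCat A) ℤ)
    (hPbdd : ∀ i, i ≤ 2 ^ n - 1 → {j : ℤ | ¬ IsZero ((P i).X j)}.Finite)
    (hPfin : ∀ i, i ≤ 2 ^ n - 1 → ∀ j : ℤ, Module.Finite A ((P i).X j))
    (hPind : ∀ i, i ≤ 2 ^ n - 1 → IndecCx (P i))
    (hlc : ∀ i, i ≤ 2 ^ n - 1 → lcLE (P i) n)
    (f : ∀ i, P i ⟶ P (i + 1))
    (hf : ∀ i, i < 2 ^ n - 1 → ¬ IsIso (f i)) :
    compChain P f (2 ^ n - 1) = 0 := by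
  have h := rank_compChain_le n n le_rfl (2 ^ n - 1) (Nat.sub_add_cancel Nat.one_le_two_pow)
    P f hPind hlc hf
  rw [Nat.sub_self, Nat.cast_zero, nonpos_iff_eq_zero, isLength_lc.zero_iff] at h
  rw [← image.fac (compChain P f (2 ^ n - 1)), h.eq_of_src (image.ι _) 0, comp_zero]
end

section
/- Let k be a field and A a finite-dimensional k-algebra that is indecomposable as an algebra (not isomorphic to a product of two nonzero k-algebras). If there exists an Auslander-Reiten triangle Y → 0 → X → Y[1] in K^{-,b}(P), i.e. an Auslander-Reiten triangle whose middle term is a zero object, then A is a simple algebra (A has no two-sided ideals other than 0 and A). -/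
/-!
Let `X → Y → Z → X[1]` be the given Auslander-Reiten triangle. Since its middle term is zero, every
map `W → Z` in `K^{-,b}(P)` is a retraction or zero (`RetractionOrZero`). As `Z` is nonzero, bounded
above and projective, some cohomology module `M = Hⁱ(Z)` is nonzero (`exists_cycle_not_boundary`).

Testing `Z` against two-term complexes `P → Q` gives two properties of `M`:

* every nonzero map `A → M` is a split epimorphism, from the stalk complex of `A`
  (`RetractionOrZero.splitCyclic`); so `M` is simple and projective;
* `M` is injective, by Baer's criterion, from the complexes `Aⁿ → A` whose differential has a given
  left ideal as image (`RetractionOrZero.baer`).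

Let `J` be the annihilator of `M` and `T` the trace ideal of `M` in `A`, both two-sided. Projectivity
of the simple module `M` gives `J + T = A` (`annihilator_sup_traceIdeal`). Clearly `J T = 0`, and
injectivity gives `T J = 0` (`traceIdeal_mul_annihilator`); together with `J + T = A` this yields
`J ∩ T = 0`. Hence `A ≅ A/J × A/T`, and since `A` is indecomposable and `J ≠ A`, we get `T = A` and
`J = 0`. Finally a two-sided ideal `I ≠ 0` satisfies `I M ≠ 0`, so `I M = M`, and then `I` contains
the image of every map `M → A`, that is, `I ⊇ T = A`.
-/

open CategoryTheory Limits

variable {k : Type} [Field k] {A : Type} [Ring A] [Algebra k A] [FiniteDimensional k A]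

/-- The quotient functor to the homotopy category `K(Mod A)`. -/
noncomputable abbrev Qh : CochainComplex (ModuleCat A) ℤ ⥤
    HomotopyCategory (ModuleCat A) (ComplexShape.up ℤ) :=
  HomotopyCategory.quotient (ModuleCat A) (ComplexShape.up ℤ)

/-- A complex in `Comp^{-,b}(P)` is indecomposable as an object of `K^{-,b}(P)` if it is
nonzero there and not isomorphic to the direct sum of two nonzero objects of
`K^{-,b}(P)`. -/
def IndecKmb (X : CochainComplex (ModuleCat A) ℤ) : Prop :=
  ¬ IsZero (Qh.obj X) ∧
  ∀ Y Z : CochainComplex (ModuleCat A) ℤ, IsCompMinusB Y → IsCompMinusB Z →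
    ¬ IsZero (Qh.obj Y) → ¬ IsZero (Qh.obj Z) → IsEmpty (Qh.obj X ≅ Qh.obj (Y ⊞ Z))

/-- The chain maps `u`, `v`, `w` induce an Auslander-Reiten triangle
`X → Y → Z → X[1]` in `K^{-,b}(P)`: the induced triangle is distinguished in the homotopy
category, `X` and `Z` belong to `K^{-,b}(P)` and are indecomposable there, the connecting
morphism is nonzero in the homotopy category, and every map `W ⟶ Z` from an object of
`K^{-,b}(P)` which is not a retraction in `K^{-,b}(P)` factors through `v` up to
homotopy. -/
def IsARTriangleKmb {X Y Z : CochainComplex (ModuleCat A) ℤ}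
    (u : X ⟶ Y) (v : Y ⟶ Z) (w : Z ⟶ X⟦(1 : ℤ)⟧) : Prop :=
  IsCompMinusB X ∧ IsCompMinusB Y ∧ IsCompMinusB Z ∧
  (CategoryTheory.Pretriangulated.Triangle.mk (Qh.map u) (Qh.map v)
      (Qh.map w ≫ (Qh.commShiftIso (1 : ℤ)).hom.app X) ∈
    CategoryTheory.Pretriangulated.distinguishedTriangles) ∧
  IndecKmb X ∧ IndecKmb Z ∧ Qh.map w ≠ 0 ∧
  ∀ W : CochainComplex (ModuleCat A) ℤ, IsCompMinusB W →
    ∀ f : W ⟶ Z, ¬ RetractionK f → ∃ f' : W ⟶ Y, Nonempty (Homotopy (f' ≫ v) f)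

/-! ### The trace ideal of a simple projective injective module -/

/-- The trace ideal of `M` in `A`: the sum of the images of all `A`-linear maps `M → A`. -/
def traceIdeal (R : Type*) [Ring R] (M : Type*) [AddCommGroup M] [Module R M] : Ideal R :=
  ⨆ f : M →ₗ[R] R, LinearMap.range f

section Trace

variable {R : Type*} [Ring R] {M : Type*} [AddCommGroup M] [Module R M]

lemma apply_mem_traceIdeal (f : M →ₗ[R] R) (m : M) : f m ∈ traceIdeal R M :=
  (le_iSup (fun f : M →ₗ[R] R => LinearMap.range f) f) ⟨m, rfl⟩

lemma traceIdeal_le {I : Submodule R R} (h : ∀ (f : M →ₗ[R] R) (m : M), f m ∈ I) :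
    traceIdeal R M ≤ I := by
  refine iSup_le fun f => ?_
  rintro _ ⟨m, rfl⟩
  exact h f m

instance traceIdeal_isTwoSided : (traceIdeal R M).IsTwoSided := by
  refine ⟨fun {a} b ha => ?_⟩
  -- right multiplication by `b` is left linear, so composing with it sends maps `M → R` to such maps
  have : traceIdeal R M ≤ Submodule.comap (LinearMap.toSpanSingleton R R b) (traceIdeal R M) :=
    traceIdeal_le fun f m => apply_mem_traceIdeal (LinearMap.toSpanSingleton R R b ∘ₗ f) m
  simpa using this ha

/-- The modules `M` to which the homological argument leads: every nonzero `m : M` gives a split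
epimorphism `R → M`, `r ↦ r • m`. For nonzero `M` this says that `M` is simple projective. -/
def SplitCyclic (R : Type*) [Ring R] (M : Type*) [AddCommGroup M] [Module R M] : Prop :=
  ∀ m : M, m ≠ 0 → ∃ s : M →ₗ[R] R, ∀ x, s x • m = x

lemma SplitCyclic.eq_top (hM : SplitCyclic R M) {N : Submodule R M} {m : M} (hm : m ≠ 0)
    (hmN : m ∈ N) (x : M) : x ∈ N := by
  obtain ⟨s, hs⟩ := hM m hm
  rw [← hs x]
  exact N.smul_mem _ hmN

lemma annihilator_mul_traceIdeal {j t : R} (hj : j ∈ Module.annihilator R M)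
    (ht : t ∈ traceIdeal R M) : j * t = 0 := by
  rw [Module.mem_annihilator] at hj
  revert j
  induction ht using Submodule.iSup_induction' with
  | mem f x hx =>
    obtain ⟨m, rfl⟩ := hx
    intro j hj
    rw [← smul_eq_mul, ← f.map_smul, hj, f.map_zero]
  | zero => simp
  | add x y _ _ hx hy => intro j hj; rw [mul_add, hx hj, hy hj, add_zero]

/-- Injectivity of `M` enters here: if `f m * j ≠ 0`, then `x ↦ f x * j` embeds `M` as a left
ideal `N` inside the annihilator; an extension `R → M` of the inverse `N → M` is of the form
`r ↦ r • m₀`, so it kills `N`, which is absurd. -/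
lemma traceIdeal_mul_annihilator (hM : SplitCyclic R M) (hB : Module.Baer R M) {j t : R}
    (hj : j ∈ Module.annihilator R M) (ht : t ∈ traceIdeal R M) : t * j = 0 := by
  have key : traceIdeal R M ≤ LinearMap.ker (LinearMap.toSpanSingleton R R j) := by
    refine traceIdeal_le fun f m => ?_
    set g : M →ₗ[R] R := LinearMap.toSpanSingleton R R j ∘ₗ f with hg
    change g m = 0
    by_contra hm
    have hm0 : m ≠ 0 := by rintro rfl; simp at hm
    have hinj : LinearMap.ker g = ⊥ := by
      rw [eq_bot_iff]
      intro x hx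
      by_contra hx0
      exact hm (hM.eq_top hx0 hx m)
    let e := LinearEquiv.ofInjective g (LinearMap.ker_eq_bot.1 hinj)
    obtain ⟨p, hp⟩ := hB (LinearMap.range g) e.symm.toLinearMap
    have h1 : p (g m) = m := by
      rw [hp (g m) ⟨m, rfl⟩]
      exact e.symm_apply_apply m
    have h2 : p (g m) = 0 := by
      have hmem : g m ∈ Module.annihilator R M := by
        rw [hg]
        exact Ideal.mul_mem_left _ (f m) hj
      rw [Module.mem_annihilator] at hmem
      have := p.map_smul (g m) 1
      rw [smul_eq_mul, mul_one] at this
      rw [this, hmem]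
    exact hm0 (h1.symm.trans h2)
  simpa using key ht

/-- Projectivity of `M` enters here. Among the left ideals `I` containing the annihilator with
`I + T = R`, where `T` is the trace ideal, a minimal one must equal the annihilator: if `a ∈ I` and
`a • m ≠ 0`, then `x ↦ x • m` is a split epimorphism `I → M`, whose kernel is a smaller such
ideal. -/
lemma annihilator_sup_traceIdeal [IsArtinianRing R] (hM : SplitCyclic R M) :
    Module.annihilator R M ⊔ traceIdeal R M = ⊤ := by
  obtain ⟨I, ⟨hI1, hI2⟩, hmin⟩ := WellFounded.has_min
    (r := fun I J : Submodule R R => I < J) (IsWellFounded.wf)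
    {I : Submodule R R | Module.annihilator R M ≤ I ∧ I ⊔ traceIdeal R M = ⊤} ⟨⊤, by simp⟩
  suffices h : I ≤ Module.annihilator R M by
    rw [le_antisymm hI1 h]; exact hI2
  intro a ha
  rw [Module.mem_annihilator]
  intro m
  by_contra ham
  obtain ⟨s, hs⟩ := hM _ ham
  let φ : R →ₗ[R] M := LinearMap.toSpanSingleton R M m
  refine hmin (I ⊓ LinearMap.ker φ) ⟨le_inf hI1 ?_, ?_⟩ (lt_of_le_of_ne inf_le_left ?_)
  · intro r hr
    rw [Module.mem_annihilator] at hr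
    simpa [φ] using hr m
  · rw [eq_top_iff, ← hI2]
    refine sup_le ?_ le_sup_right
    intro x hx
    -- the component of `x` in the copy of `M` that splits `I → M`
    have hy : s (x • m) * a ∈ traceIdeal R M :=
      Ideal.mul_mem_right _ _ (apply_mem_traceIdeal s _)
    rw [← sub_add_cancel x (s (x • m) * a)]
    refine Submodule.add_mem_sup ⟨sub_mem hx (Ideal.mul_mem_left I _ ha), ?_⟩ hy
    change (x - s (x • m) * a) • m = 0
    rw [sub_smul, mul_smul, hs, sub_self]
  · intro h
    have : a ∈ I ⊓ LinearMap.ker φ := h.ge ha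
    exact ham this.2

/-- If an algebra that is not a product has a nonzero module that is simple, projective and
injective, then it is simple: it is the product of its quotients by the annihilator and by the trace
ideal of the module. -/
lemma isSimpleRing_of_splitCyclic_of_baer {K : Type} [Field K] {B : Type} [Ring B] [Algebra K B]
    [FiniteDimensional K B]
    (hB : ∀ (C D : Type) [Ring C] [Ring D] [Algebra K C] [Algebra K D],
      Nontrivial C → Nontrivial D → IsEmpty (B ≃ₐ[K] (C × D)))
    {N : Type*} [AddCommGroup N] [Module B N] [Nontrivial N] (hN : SplitCyclic B N)
    (hN' : Module.Baer B N) : IsSimpleRing B := by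
  have : IsArtinianRing B := IsArtinianRing.of_finite K B
  set J : Ideal B := Module.annihilator B N with hJ
  have : J.IsTwoSided := inferInstanceAs (Module.annihilator B N).IsTwoSided
  set T : Ideal B := traceIdeal B N with hT
  have : T.IsTwoSided := inferInstanceAs (traceIdeal B N).IsTwoSided
  have hsup : J ⊔ T = ⊤ := annihilator_sup_traceIdeal hN
  obtain ⟨j, hj, t, ht, hjt⟩ := Submodule.mem_sup.1 (hsup ▸ Submodule.mem_top : (1 : B) ∈ J ⊔ T)
  have hinf : ∀ x, x ∈ J → x ∈ T → x = 0 := fun x hxJ hxT => by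
    rw [← one_mul x, ← hjt, add_mul, annihilator_mul_traceIdeal hj hxT,
      traceIdeal_mul_annihilator hN hN' hxJ ht, add_zero]
  have hJtop : J ≠ ⊤ := by
    intro h
    obtain ⟨m, hm⟩ := exists_ne (0 : N)
    have h1 : (1 : B) ∈ Module.annihilator B N := by rw [← hJ, h]; trivial
    rw [Module.mem_annihilator] at h1
    exact hm (by simpa using h1 m)
  have hTtop : T = ⊤ := by
    by_contra hTtop
    let F : B →ₐ[K] (B ⧸ J) × (B ⧸ T) := (Ideal.Quotient.mkₐ K J).prod (Ideal.Quotient.mkₐ K T)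
    have hF : Function.Bijective F := by
      constructor
      · rw [injective_iff_map_eq_zero]
        intro x hx
        have hx' := Prod.ext_iff.1 hx
        exact hinf x (Ideal.Quotient.eq_zero_iff_mem.1 hx'.1)
          (Ideal.Quotient.eq_zero_iff_mem.1 hx'.2)
      · rintro ⟨x, y⟩
        obtain ⟨x, rfl⟩ := Ideal.Quotient.mk_surjective x
        obtain ⟨y, rfl⟩ := Ideal.Quotient.mk_surjective y
        refine ⟨x * t + y * j, Prod.ext ?_ ?_⟩
        · refine Ideal.Quotient.eq.2 ?_
          have : x * t + y * j - x = y * j - x * j := by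
            rw [eq_sub_of_add_eq' hjt]; noncomm_ring
          rw [this]
          exact sub_mem (J.mul_mem_left _ hj) (J.mul_mem_left _ hj)
        · refine Ideal.Quotient.eq.2 ?_
          have : x * t + y * j - y = x * t - y * t := by
            rw [eq_sub_of_add_eq hjt]; noncomm_ring
          rw [this]
          exact sub_mem (T.mul_mem_left _ ht) (T.mul_mem_left _ ht)
    exact (hB (B ⧸ J) (B ⧸ T) (Ideal.Quotient.nontrivial_iff.2 hJtop)
      (Ideal.Quotient.nontrivial_iff.2 hTtop)).false (AlgEquiv.ofBijective F hF)
  have hnt : Nontrivial B := by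
    by_contra h
    rw [not_nontrivial_iff_subsingleton] at h
    exact hJtop (Subsingleton.elim _ _)
  refine IsSimpleRing.of_eq_bot_or_eq_top fun I => ?_
  by_cases hI : ∀ a ∈ I, a = 0
  · left
    rw [eq_bot_iff]
    intro a ha
    exact (TwoSidedIdeal.mem_bot B).2 (hI a ha)
  right
  push Not at hI
  obtain ⟨a, haI, ha⟩ := hI
  -- `N` is faithful, so `a • m ≠ 0` for some `m`, and `a • m` generates `N`
  have haJ : a ∉ J := fun h => ha (hinf a h (hTtop ▸ Submodule.mem_top))
  rw [hJ, Module.mem_annihilator] at haJ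
  push Not at haJ
  obtain ⟨m, hm⟩ := haJ
  have hle : T ≤ TwoSidedIdeal.asIdeal I := by
    refine traceIdeal_le fun f n => ?_
    obtain ⟨s, hs⟩ := hN _ hm
    rw [← hs n, map_smul, map_smul]
    exact Ideal.mul_mem_left _ _ (TwoSidedIdeal.mem_asIdeal.2 (I.mul_mem_right _ _ haI))
  have h1 : (1 : B) ∈ I := TwoSidedIdeal.mem_asIdeal.1 (hle (hTtop ▸ Submodule.mem_top))
  rw [eq_top_iff]
  intro x _
  simpa using I.mul_mem_left x 1 h1

end Trace

/-! ### The cohomology of the end term of the triangle -/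

section Homological

universe v

variable {R : Type} [Ring R]

/-- A two-term complex of finitely generated projectives lies in `Comp^{-,b}(P)`. -/
lemma isCompMinusB_double {P Q : ModuleCat.{v} R} [Module.Finite R P] [Module.Finite R Q]
    [Module.Projective R P] [Module.Projective R Q] (d : P ⟶ Q) (i : ℤ) :
    IsCompMinusB (HomologicalComplex.double d
      (show (ComplexShape.up ℤ).Rel i (i + 1) from rfl)) := by
  set W := HomologicalComplex.double d (show (ComplexShape.up ℤ).Rel i (i + 1) from rfl) with hW
  have e₀ : W.X i ≅ P := HomologicalComplex.doubleXIso₀ d _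
  have e₁ : W.X (i + 1) ≅ Q := HomologicalComplex.doubleXIso₁ d _ (by simp)
  have hz : ∀ j, j ≠ i → j ≠ i + 1 → IsZero (W.X j) :=
    fun j h₀ h₁ => HomologicalComplex.isZero_double_X d _ j h₀ h₁
  refine ⟨fun j => ?_, fun j => ?_, ⟨i + 2, fun j hj => hz j (by omega) (by omega)⟩, ?_⟩
  · by_cases h₀ : j = i
    · subst h₀
      exact Module.Finite.equiv e₀.toLinearEquiv.symm
    by_cases h₁ : j = i + 1
    · subst h₁
      exact Module.Finite.equiv e₁.toLinearEquiv.symm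
    have := ModuleCat.subsingleton_of_isZero (hz j h₀ h₁)
    infer_instance
  · by_cases h₀ : j = i
    · subst h₀
      exact Module.Projective.of_equiv e₀.toLinearEquiv.symm
    by_cases h₁ : j = i + 1
    · subst h₁
      exact Module.Projective.of_equiv e₁.toLinearEquiv.symm
    have := ModuleCat.subsingleton_of_isZero (hz j h₀ h₁)
    infer_instance
  · refine Set.Finite.subset (Set.toFinite {i, i + 1}) fun j hj => ?_
    by_contra hj'
    simp only [Set.mem_insert_iff, Set.mem_singleton_iff, not_or] at hj'
    exact hj (ShortComplex.isZero_homology_of_isZero_X₂ _ (hz j hj'.1 hj'.2))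

/-- A bounded above complex of projectives that is nonzero in the homotopy category has a cycle
that is not a boundary: otherwise it is acyclic and K-projective, hence contractible. -/
lemma exists_cycle_not_boundary {Z : CochainComplex (ModuleCat.{v} R) ℤ} (hZ : IsCompMinusB Z)
    (hZ0 : ¬ IsZero (Qh.obj Z)) :
    ∃ (i : ℤ) (z : Z.X i), Z.d i (i + 1) z = 0 ∧ ∀ y, Z.d (i - 1) i y ≠ z := by
  by_contra! h
  obtain ⟨-, hproj, ⟨N, hN⟩, -⟩ := hZ
  have : Z.IsStrictlyLE N := (CochainComplex.isStrictlyLE_iff Z N).2 fun i hi => hN i hi.le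
  have : ∀ n, CategoryTheory.Projective (Z.X n) := fun n => by
    have := hproj n
    exact ModuleCat.projective_of_categoryTheory_projective _
  have hK := CochainComplex.isKProjective_of_projective Z N
  have hac : HomologicalComplex.Acyclic Z := fun i => by
    rw [HomologicalComplex.exactAt_iff' Z (i - 1) i (i + 1) (by simp) (by simp),
      ShortComplex.moduleCat_exact_iff]
    exact fun z hz => h i z hz
  refine hZ0 ?_
  rw [IsZero.iff_id_eq_zero, ← CategoryTheory.Functor.map_id,
    HomotopyCategory.eq_of_homotopy _ _ (CochainComplex.IsKProjective.homotopyZero (𝟙 Z) hac),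
    Functor.map_zero]

/-- Every map to `Z` from an object of `K^{-,b}(P)` is a retraction or zero, up to homotopy. This
is what the Auslander-Reiten property of a triangle ending in `Z` with zero middle term says. -/
def RetractionOrZero (Z : CochainComplex (ModuleCat.{v} R) ℤ) : Prop :=
  ∀ W, IsCompMinusB W → ∀ f : W ⟶ Z, RetractionK f ∨ Nonempty (Homotopy f 0)

/-- `RetractionOrZero`, spelled out for a map to `Z` from a two-term complex `P → Q` in degrees
`i` and `i + 1` that vanishes on `Q`. -/
lemma RetractionOrZero.two_term {Z : CochainComplex (ModuleCat.{v} R) ℤ} (hZ : RetractionOrZero Z)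
    (i : ℤ) {P Q : ModuleCat.{v} R} [Module.Finite R P] [Module.Finite R Q]
    [Module.Projective R P] [Module.Projective R Q] (d : P ⟶ Q) (α : P ⟶ Z.X i)
    (hα : α ≫ Z.d i (i + 1) = 0) :
    (∃ g : Z.X i ⟶ P, Z.d (i - 1) i ≫ g = 0 ∧ ∀ z, Z.d i (i + 1) z = 0 →
      d (g z) = 0 ∧ ∃ y, Z.d (i - 1) i y = α (g z) - z) ∨
    (∃ h : Q ⟶ Z.X i, h ≫ Z.d i (i + 1) = 0 ∧ ∃ h' : P ⟶ Z.X (i - 1),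
      α = d ≫ h + h' ≫ Z.d (i - 1) i) := by
  have hr : (ComplexShape.up ℤ).Rel i (i + 1) := rfl
  have hr' : (ComplexShape.up ℤ).Rel (i - 1) i := by simp
  have hne : i ≠ i + 1 := by simp
  let f : HomologicalComplex.double d hr ⟶ Z :=
    HomologicalComplex.mkHomFromDouble hr hne α 0 (by simp [hα]) (by simp)
  have hf : f.f i = (HomologicalComplex.doubleXIso₀ d hr).hom ≫ α :=
    HomologicalComplex.mkHomFromDouble_f₀ ..
  have hf₁ : f.f (i + 1) = 0 := by
    rw [show f.f (i + 1) = _ from HomologicalComplex.mkHomFromDouble_f₁ .., comp_zero]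
  rcases hZ _ (isCompMinusB_double d i) f with ⟨g, ⟨H⟩⟩ | H
  · left
    refine ⟨g.f i ≫ (HomologicalComplex.doubleXIso₀ d hr).hom, ?_, fun z hz => ⟨?_, ?_⟩⟩
    · rw [← g.comm_assoc, HomologicalComplex.double_d_eq_zero₀ _ _ _ _ (by simp), zero_comp,
        comp_zero]
    · have h1 : (g.f i ≫ (HomologicalComplex.doubleXIso₀ d hr).hom) ≫ d =
          Z.d i (i + 1) ≫ g.f (i + 1) ≫ (HomologicalComplex.doubleXIso₁ d hr hne).hom := by
        rw [← g.comm_assoc, HomologicalComplex.double_d _ _ hne]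
        simp
      have h2 := ConcreteCategory.congr_hom h1 z
      simp only [ModuleCat.hom_comp, LinearMap.comp_apply] at h2 ⊢
      rw [h2, hz, map_zero, map_zero]
    · have h1 := H.comm i
      rw [dNext_eq _ hr, prevD_eq _ hr'] at h1
      have h2 := ConcreteCategory.congr_hom h1 z
      refine ⟨H.hom i (i - 1) z, ?_⟩
      simp [hf, hz] at h2 ⊢
      rw [h2]; abel
  · obtain ⟨H⟩ := H
    right
    have h1 := H.comm i
    rw [dNext_eq _ hr, prevD_eq _ hr', hf] at h1
    have h2 := H.comm (i + 1)
    rw [dNext_eq _ (show (ComplexShape.up ℤ).Rel (i + 1) (i + 1 + 1) from rfl), prevD_eq _ hr,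
      hf₁, HomologicalComplex.double_d_eq_zero₀ _ _ _ _ hne.symm] at h2
    refine ⟨(HomologicalComplex.doubleXIso₁ d hr hne).inv ≫ H.hom (i + 1) i, ?_,
      (HomologicalComplex.doubleXIso₀ d hr).inv ≫ H.hom i (i - 1), ?_⟩
    · simp at h2
      simp [← h2]
    · rw [← cancel_epi (HomologicalComplex.doubleXIso₀ d hr).hom, h1,
        HomologicalComplex.double_d _ _ hne]
      simp

/-- The cohomology of `Z` in degree `i`, as the explicit quotient of cycles by boundaries. -/
abbrev Coh (Z : CochainComplex (ModuleCat.{v} R) ℤ) (i : ℤ) : Type v :=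
  LinearMap.ker (Z.d i (i + 1)).hom ⧸
    (LinearMap.range (Z.d (i - 1) i).hom).submoduleOf (LinearMap.ker (Z.d i (i + 1)).hom)

/-- The class of a cycle in the cohomology. -/
abbrev Coh.mk (Z : CochainComplex (ModuleCat.{v} R) ℤ) (i : ℤ) :
    LinearMap.ker (Z.d i (i + 1)).hom →ₗ[R] Coh Z i :=
  Submodule.mkQ _

lemma Coh.mk_eq_zero_iff {Z : CochainComplex (ModuleCat.{v} R) ℤ} {i : ℤ}
    (z : LinearMap.ker (Z.d i (i + 1)).hom) :
    Coh.mk Z i z = 0 ↔ ∃ y, Z.d (i - 1) i y = z.1 :=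
  Submodule.Quotient.mk_eq_zero _

/-- Test `Z` against the stalk complex `R` in degree `i` (encoded as the two-term complex with zero
differential `R → R`), mapping to `Z` via a cycle representing a nonzero class. -/
lemma RetractionOrZero.splitCyclic {Z : CochainComplex (ModuleCat.{v} R) ℤ}
    (hZ : RetractionOrZero Z) (i : ℤ) : SplitCyclic R (Coh Z i) := by
  intro m hm
  obtain ⟨z, rfl⟩ := Submodule.mkQ_surjective _ m
  let α : ModuleCat.of R (ULift.{v} R) ⟶ Z.X i :=
    ModuleCat.ofHom (LinearMap.toSpanSingleton R (Z.X i) z.1 ∘ₗ ULift.moduleEquiv.toLinearMap)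
  have hα : α ≫ Z.d i (i + 1) = 0 := by
    ext x
    have := z.2
    rw [LinearMap.mem_ker] at this
    simp [α, this]
  rcases hZ.two_term i (0 : _ ⟶ ModuleCat.of R (ULift.{v} R)) α hα with ⟨g, hg, hg'⟩ | ⟨h, -, h', hh⟩
  · refine ⟨Submodule.liftQ _ (ULift.moduleEquiv.toLinearMap ∘ₗ g.hom ∘ₗ Submodule.subtype _) ?_,
      fun x => ?_⟩
    · rintro ⟨x, hx⟩ ⟨y, hy⟩
      have h1 := ConcreteCategory.congr_hom hg y
      simp at hy h1
      simp [← hy, h1]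
    · obtain ⟨x, rfl⟩ := Submodule.mkQ_surjective _ x
      obtain ⟨-, y, hy⟩ := hg' x.1 x.2
      rw [← map_smul, ← sub_eq_zero, ← map_sub]
      refine (Coh.mk_eq_zero_iff _).2 ⟨y, ?_⟩
      rw [hy]
      simp [α]
  · refine absurd ((Coh.mk_eq_zero_iff z).2 ⟨h' ⟨1⟩, ?_⟩) hm
    have h1 := ConcreteCategory.congr_hom hh ⟨1⟩
    simp [α] at h1
    exact h1.symm

/-- To extend `f : I → H` along a left ideal `I ⊆ R`, where `H` is the cohomology of `Z`, test `Z`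
against the two-term complex `Rⁿ → R` whose differential has image `I`, mapping to `Z` by a lift of
`Rⁿ → I → H` to the cycles. This map is zero on cohomology, so it is not a retraction,
and a null-homotopy of it contains the extension `R → H`. -/
lemma RetractionOrZero.baer [IsNoetherianRing R] {Z : CochainComplex (ModuleCat.{v} R) ℤ}
    (hZ : RetractionOrZero Z) (i : ℤ) [Nontrivial (Coh Z i)] : Module.Baer R (Coh Z i) := by
  intro I f
  obtain ⟨n, π, hπ⟩ := Module.Finite.exists_fin' R I
  let P := ModuleCat.of R (Fin n → ULift.{v} R)
  let π' : (Fin n → ULift.{v} R) →ₗ[R] I :=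
    π ∘ₗ (LinearEquiv.piCongrRight fun _ => ULift.moduleEquiv).toLinearMap
  have hπ' : Function.Surjective π' := hπ.comp (LinearEquiv.surjective _)
  obtain ⟨α, hα⟩ := Module.projective_lifting_property (Coh.mk Z i) (f ∘ₗ π')
    (Submodule.mkQ_surjective _)
  have hα' : ∀ p, Coh.mk Z i (α p) = f (π' p) := fun p => LinearMap.congr_fun hα p
  let d : P ⟶ ModuleCat.of R (ULift.{v} R) :=
    ModuleCat.ofHom (ULift.moduleEquiv.symm.toLinearMap ∘ₗ I.subtype ∘ₗ π')
  let β : P ⟶ Z.X i := ModuleCat.ofHom (Submodule.subtype _ ∘ₗ α)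
  have hβ : β ≫ Z.d i (i + 1) = 0 := by
    ext1
    exact LinearMap.ext fun p => (α p).2
  rcases hZ.two_term i d β hβ with ⟨g, -, hg⟩ | ⟨h, hh, h', hh'⟩
  · exfalso
    obtain ⟨m, hm⟩ := exists_ne (0 : Coh Z i)
    obtain ⟨z, rfl⟩ := Submodule.mkQ_surjective _ m
    obtain ⟨h0, hb⟩ := hg z.1 z.2
    have h1 : π' (g z.1) = 0 := Subtype.ext (congrArg ULift.down h0)
    have h2 : Coh.mk Z i (α (g z.1)) = 0 := by rw [hα', h1, map_zero]
    have h3 : Coh.mk Z i (α (g z.1) - z) = 0 := (Coh.mk_eq_zero_iff _).2 hb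
    rw [map_sub, h2, zero_sub, neg_eq_zero] at h3
    exact hm h3
  · let η : ULift.{v} R →ₗ[R] LinearMap.ker (Z.d i (i + 1)).hom :=
      h.hom.codRestrict _ fun x => ConcreteCategory.congr_hom hh x
    refine ⟨Coh.mk Z i ∘ₗ η ∘ₗ ULift.moduleEquiv.symm.toLinearMap, fun x hx => ?_⟩
    obtain ⟨p, hp⟩ := hπ' ⟨x, hx⟩
    rw [← hp, ← hα', ← sub_eq_zero]
    change Coh.mk Z i (η ⟨x⟩) - _ = 0
    rw [← map_sub, Coh.mk_eq_zero_iff]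
    refine ⟨-h' p, ?_⟩
    have h1 : (α p).1 = h (d p) + Z.d (i - 1) i (h' p) := by
      change β p = _
      rw [hh']
      rfl
    have h2 : d p = ⟨x⟩ := congrArg ULift.up (congrArg Subtype.val hp)
    change _ = h ⟨x⟩ - (α p).1
    rw [h1, h2, map_neg]
    abel

end Homological

/-- If `A` is an indecomposable finite-dimensional `k`-algebra and `K^{-,b}(P)` has an
Auslander-Reiten triangle whose middle term is a zero object, then `A` is simple. -/
theorem simple_of_AR_triangle_with_zero_middle_term
    (hA : ∀ (B C : Type) [Ring B] [Ring C] [Algebra k B] [Algebra k C],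
      Nontrivial B → Nontrivial C → IsEmpty (A ≃ₐ[k] (B × C)))
    (X Y Z : CochainComplex (ModuleCat A) ℤ)
    (u : X ⟶ Y) (v : Y ⟶ Z) (w : Z ⟶ X⟦(1 : ℤ)⟧)
    (hAR : IsARTriangleKmb u v w) (hmid : IsZero (Qh.obj Y)) :
    IsSimpleRing A := by
  obtain ⟨-, -, hZ, -, -, hZind, -, hfac⟩ := hAR
  have hRZ : RetractionOrZero Z := by
    intro W hW f
    by_cases hf : RetractionK f
    · exact Or.inl hf
    · obtain ⟨f', ⟨H⟩⟩ := hfac W hW f hf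
      refine Or.inr ((HomotopyCategory.quotient_map_eq_zero_iff f).1 ?_)
      rw [← HomotopyCategory.eq_of_homotopy _ _ H, Functor.map_comp, hmid.eq_of_tgt (Qh.map f') 0,
        zero_comp]
  obtain ⟨i, z, hz, hz'⟩ := exists_cycle_not_boundary hZ hZind.1
  have : IsArtinianRing A := IsArtinianRing.of_finite k A
  have : IsNoetherianRing A := inferInstance
  have : Nontrivial (Coh Z i) := by
    refine ⟨Coh.mk Z i ⟨z, hz⟩, 0, fun h => ?_⟩
    obtain ⟨y, hy⟩ := (Coh.mk_eq_zero_iff _).1 h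
    exact hz' y hy
  exact isSimpleRing_of_splitCyclic_of_baer hA (hRZ.splitCyclic i) (hRZ.baer i)
end
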